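/- Partition {1,…,t} into consecutive blocks B_1,…,B_n with |B_j| = |c_j|, and for 1 ≤ i ≤ r−1 define the reduced promotion matrix PMr^i(T) ∈ ℤ_{≥0}^{n×n} by PMr^i(T)_{u,v} := #{(a,b) ∈ B_u × B_v : i ∈ PM(T)_{a,b}}. If T and T′ are r-row fluctuating tableaux of length n with the same type c (with t := Σ_j |c_j| ≥ 1) and PMr^i(T) = PMr^i(T′) for all 1 ≤ i ≤ r−1, then T = T′. -/

import Mathlib

open scoped Classical

noncomputable section

namespace FT

/-- A (raw) `r`-row integer vector; generalized partitions are the antitone ones. -/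
abbrev GP (r : ℕ) := Fin r → ℤ

/-- The weakly decreasing rearrangement of a tuple. -/
def sortDesc {r : ℕ} (α : GP r) : GP r := fun i => (α ∘ Tuple.sort α) i.rev

/-- Standard basis vector (0-indexed). -/
def eV {r : ℕ} (a : Fin r) : GP r := fun i => if i = a then 1 else 0

/-- Standard basis vector with 1-indexed row `a` (zero if out of range). -/
def eN (r : ℕ) (a : ℕ) : GP r := fun i => if (i : ℕ) + 1 = a then 1 else 0

/-- Indicator vector of a set of rows. -/
def indV {r : ℕ} (S : Finset (Fin r)) : GP r := fun i => if i ∈ S then 1 else 0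

/-- `colStep r c μ λ`: `λ` is obtained from `μ` by adding (if `c ≥ 0`) or removing
(if `c ≤ 0`) a skew column of `|c|` boxes. -/
def colStep (r : ℕ) (c : ℤ) (μ lam : GP r) : Prop :=
  ∃ S : Finset (Fin r), S.card = c.natAbs ∧
    (if 0 ≤ c then lam = μ + indV S else lam = μ - indV S)

/-- Skew fluctuating tableau of length `n` and type `c` (recorded at indices `0,…,n`;
values of `T` and `c` beyond those indices are irrelevant). -/
def IsSkewFT (r n : ℕ) (T : ℕ → GP r) (c : ℕ → ℤ) : Prop :=
  (∀ k ≤ n, Antitone (T k)) ∧ ∀ j < n, colStep r (c j) (T j) (T (j + 1))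

/-- (Non-skew) fluctuating tableau: starts at the empty shape. -/
def IsFT (r n : ℕ) (T : ℕ → GP r) (c : ℕ → ℤ) : Prop :=
  IsSkewFT r n T c ∧ T 0 = 0

/-- Rectangular: the final shape is constant. -/
def Rect (r n : ℕ) (T : ℕ → GP r) : Prop := ∃ m : ℤ, ∀ i, T n i = m

/-- Bender–Knuth involution `BK_i` (for `1 ≤ i ≤ n-1`). -/
def BK {r : ℕ} (i : ℕ) (T : ℕ → GP r) : ℕ → GP r :=
  fun k => if k = i then sortDesc (T (i + 1) + T (i - 1) - T i) else T k

/-- `BKseg a m = BK (a+m-1) ∘ ⋯ ∘ BK a` (apply `BK a` first). -/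
def BKseg {r : ℕ} (a : ℕ) : ℕ → (ℕ → GP r) → ℕ → GP r
  | 0 => id
  | m + 1 => BK (a + m) ∘ BKseg a m

/-- Promotion `P = BK_{n-1} ∘ ⋯ ∘ BK_1` on length-`n` tableaux. -/
def promo {r : ℕ} (n : ℕ) (T : ℕ → GP r) : ℕ → GP r := BKseg 1 (n - 1) T

/-- `BKsegRev a m = BK a ∘ ⋯ ∘ BK (a+m-1)` (apply `BK (a+m-1)` first). -/
def BKsegRev {r : ℕ} (a : ℕ) : ℕ → (ℕ → GP r) → ℕ → GP r
  | 0 => id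
  | m + 1 => BKsegRev a m ∘ BK (a + m)

/-- Inverse of promotion: `P⁻¹ = BK_1 ∘ ⋯ ∘ BK_{n-1}`. -/
def promoInv {r : ℕ} (n : ℕ) (T : ℕ → GP r) : ℕ → GP r := BKsegRev 1 (n - 1) T

def evacAux {r : ℕ} : ℕ → (ℕ → GP r) → ℕ → GP r
  | 0, T => T
  | m + 1, T => evacAux m (BKseg 1 (m + 1) T)

/-- Evacuation `E = BK_1 ∘ (BK_2∘BK_1) ∘ ⋯ ∘ (BK_{n-1}∘⋯∘BK_1)`. -/
def evac {r : ℕ} (n : ℕ) (T : ℕ → GP r) : ℕ → GP r := evacAux (n - 1) T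

def devacAux {r : ℕ} (n : ℕ) : ℕ → (ℕ → GP r) → ℕ → GP r
  | 0, T => T
  | m + 1, T => BKseg (n - (m + 1)) (m + 1) (devacAux n m T)

/-- Dual evacuation `E* = (BK_{n-1}∘⋯∘BK_1) ∘ (BK_{n-1}∘⋯∘BK_2) ∘ ⋯ ∘ BK_{n-1}`. -/
def devac {r : ℕ} (n : ℕ) (T : ℕ → GP r) : ℕ → GP r := devacAux n (n - 1) T

/-- `rev(-v)`. -/
def revNeg {r : ℕ} (v : GP r) : GP r := fun i => - v i.rev

/-- Time reversal `τ`. -/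
def tauT {r : ℕ} (n : ℕ) (T : ℕ → GP r) : ℕ → GP r := fun k => T (n - k)

/-- `ϖ`. -/
def varpiT {r : ℕ} (T : ℕ → GP r) : ℕ → GP r := fun k => revNeg (T k)

/-- `ε`. -/
def epsT {r : ℕ} (n : ℕ) (T : ℕ → GP r) : ℕ → GP r := fun k => revNeg (T (n - k))

/-- Sign of the `j`-th step of `T` (paper indexing: step `j` goes from `λ^{j-1}` to `λ^j`). -/
def sgnStep {r : ℕ} (T : ℕ → GP r) (j : ℕ) : ℤ :=
  if T j = T (j - 1) then 0 else if T (j - 1) ≤ T j then 1 else -1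

/-- The switch involution `toggle_j` (paper indexing, `1 ≤ j ≤ n`). -/
def toggleT {r : ℕ} (j : ℕ) (T : ℕ → GP r) : ℕ → GP r :=
  fun m => if m < j then T m else fun i => T m i - sgnStep T j

/-- Number of boxes added/removed in the step from `T j` to `T (j+1)`. -/
def stepSize {r : ℕ} (T : ℕ → GP r) (j : ℕ) : ℕ :=
  (Finset.univ.filter fun i : Fin r => T (j + 1) i ≠ T j i).card

/-- Cumulative step sizes: position of `T j` inside the oscillization. -/
def cum {r : ℕ} (T : ℕ → GP r) (j : ℕ) : ℕ := ∑ j' ∈ Finset.range j, stepSize T j'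

/-- The `j`-th intermediate shape of the oscillization of the skew-column step `μ → λ`:
boxes are added smallest-row-first and removed largest-row-first. -/
def oscStep {r : ℕ} (μ lam : GP r) (j : ℕ) : GP r := fun i =>
  let S := Finset.univ.filter fun i' : Fin r => lam i' ≠ μ i'
  if i ∈ S ∧ (if μ i < lam i then (S.filter fun i' => i' ≤ i).card ≤ j
              else (S.filter fun i' => i ≤ i').card ≤ j)
  then lam i else μ i

/-- Largest index `j ≤ n` with `cum T j ≤ k`. -/
def stdIdx {r : ℕ} (n : ℕ) (T : ℕ → GP r) (k : ℕ) : ℕ :=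
  ((Finset.range (n + 1)).filter fun j => cum T j ≤ k).sup id

/-- The oscillization `std(T)` of a length-`n` tableau, a tableau of length `t = Σ|c_j|`. -/
def stdT {r : ℕ} (n : ℕ) (T : ℕ → GP r) : ℕ → GP r := fun k =>
  if stdIdx n T k = n then T n
  else oscStep (T (stdIdx n T k)) (T (stdIdx n T k + 1)) (k - cum T (stdIdx n T k))

/-- Rows of the promotion–evacuation growth diagram: `PE t S u` is `P^u(S)`
for a length-`t` (oscillating) tableau `S`. -/
def PE {r : ℕ} (t : ℕ) (S : ℕ → GP r) (u : ℕ) : ℕ → GP r := (promo t)^[u] S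

/-- `i ∈ {1,…,r-1}` is recorded at cell `(u,v)` of the growth diagram of `S`
(rows 1-indexed; `λ^{u,v} = P^u(S)(v-u)`). -/
def recorded (r t : ℕ) (S : ℕ → GP r) (i u v : ℕ) : Prop :=
  ∃ a b : Fin r,
    (PE t S (u - 1) (v - u) = PE t S u (v - u - 1) + eV a ∧
     PE t S (u - 1) (v - u + 1) = PE t S u (v - u) + eV b ∧
     (a : ℕ) < i ∧ i ≤ (b : ℕ))
    ∨
    (PE t S u (v - u - 1) = PE t S (u - 1) (v - u) + eV a ∧
     PE t S u (v - u) = PE t S (u - 1) (v - u + 1) + eV b ∧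
     (b : ℕ) < i ∧ i ≤ (a : ℕ))

/-- `i ∈ PM(T)_{u,v}` for an off-diagonal entry of the promotion matrix of `T`
(`u, v ∈ {1,…,t}`, `1 ≤ i ≤ r-1`), using the oscillization `std(T)`. -/
def PMmem (r n t : ℕ) (T : ℕ → GP r) (i u v : ℕ) : Prop :=
  1 ≤ u ∧ u ≤ t ∧ 1 ≤ v ∧ v ≤ t ∧ u ≠ v ∧ 1 ≤ i ∧ i ≤ r - 1 ∧
    recorded r t (stdT n T) i u (if u < v then v else v + t)

/-- Graph of the partial promotion function `prom_i(T)`: `prom_i(T)(u) = v`.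
By convention `prom_0 = prom_r = id` on `{1,…,t}`. -/
def promRel (r n t : ℕ) (T : ℕ → GP r) (i u v : ℕ) : Prop :=
  if i = 0 ∨ i = r then 1 ≤ u ∧ u ≤ t ∧ u = v else PMmem r n t T i u v

/-- Sum of the first `i` entries (1-indexed prefix sums). -/
def pSum {r : ℕ} (v : GP r) (i : ℕ) : ℤ :=
  ∑ j ∈ Finset.univ.filter (fun j : Fin r => (j : ℕ) < i), v j

/-- The filled oscillized local-rule grid: row index `k` counts down from the top row
(`k = 0` is `std(λ → ν)`), column index `q` goes right; the left column is
`std(κ → λ)` read so that `grid cA κ λ ν k 0 = std(κ→λ)` at position `cA - k`. -/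
def grid {r : ℕ} (cA : ℕ) (κ lam ν : GP r) : ℕ → ℕ → GP r
  | 0, q => oscStep lam ν q
  | k + 1, 0 => oscStep κ lam (cA - (k + 1))
  | k + 1, q + 1 =>
      sortDesc (grid cA κ lam ν k (q + 1) + grid cA κ lam ν (k + 1) q -
        grid cA κ lam ν k q)
  termination_by k q => (k, q)

/-- 1-indexed entry of a vector (0 if out of range). -/
def ent {r : ℕ} (v : GP r) (h : ℕ) : ℤ := if hh : h - 1 < r then v ⟨h - 1, hh⟩ else 0

/-- The chain `j_0 = 1, j_h = ` least `h`-balance point of the lattice word of `T`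
weakly after `j_{h-1}` (in `{1,…,n}`), `none` once undefined. An index `j` is an
`h`-balance point iff `(T j)_h = (T j)_{h+1}` (1-indexed rows). -/
def jChain (r n : ℕ) (T : ℕ → GP r) : ℕ → Option ℕ
  | 0 => some 1
  | h + 1 =>
    match jChain r n T h with
    | none => none
    | some jp =>
      if H : ∃ j, jp ≤ j ∧ j ≤ n ∧ ent (T j) (h + 1) = ent (T j) (h + 2) then
        some (Nat.find H)
      else none

/-- `k`: the largest `h ≤ r-1` such that `j_1, …, j_h` are all defined. -/
def kVal (r n : ℕ) (T : ℕ → GP r) : ℕ :=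
  ((Finset.range r).filter fun h => (jChain r n T h).isSome).sup id

/-- `j_h`, defaulting to `0` when undefined. -/
def jval (r n : ℕ) (T : ℕ → GP r) (h : ℕ) : ℕ := (jChain r n T h).getD 0

/-- `ω_c` for `c ∈ {0,±1,…,±r}`: top-justified column of `c` ones if `c ≥ 0`,
bottom-justified column of `|c|` minus-ones if `c < 0`. -/
def omegaGP (r : ℕ) (c : ℤ) : GP r := fun i =>
  if 0 ≤ c then (if (i : ℕ) < c.natAbs then 1 else 0)
  else (if r - c.natAbs ≤ (i : ℕ) then -1 else 0)

/-- The extremal fluctuating tableau of type `c`: partial sums of the `ω_{c_j}`. -/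
def extremal (r : ℕ) (c : ℕ → ℤ) (k : ℕ) : GP r := ∑ j ∈ Finset.range k, omegaGP r (c j)

/-- Lexicographic order: the first nonzero entry of `β - α` is positive. -/
def ltLex {r : ℕ} (α β : GP r) : Prop := ∃ i : Fin r, (∀ j, j < i → α j = β j) ∧ α i < β i

/-- Cumulative sums of `|c_j|` (block boundaries). -/
def cumC (c : ℕ → ℤ) (j : ℕ) : ℕ := ∑ j' ∈ Finset.range j, (c j').natAbs

/-- Entry `(u,v)` (for `u,v ∈ {1,…,n}`) of the reduced promotion matrix `PMr^i(T)`: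
the number of cells in the block `B_u × B_v` whose promotion-matrix entry contains `i`. -/
def PMr (r n t : ℕ) (T : ℕ → GP r) (c : ℕ → ℤ) (i u v : ℕ) : ℕ :=
  (((Finset.Icc (cumC c (u - 1) + 1) (cumC c u)) ×ˢ
    (Finset.Icc (cumC c (v - 1) + 1) (cumC c v))).filter
      fun p => PMmem r n t T i p.1 p.2).card

/-- The set of `r`-row fluctuating tableaux of length `n`, shape `lam`, type `c`,
in bundled (finitely-indexed) form. -/
def FTset (r n : ℕ) (lam : GP r) (c : Fin n → ℤ) : Set (Fin (n + 1) → GP r) :=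
  {T | (∀ k, Antitone (T k)) ∧ T 0 = 0 ∧ T (Fin.last n) = lam ∧
       ∀ j : Fin n, colStep r (c j) (T j.castSucc) (T j.succ)}


/-! ### Sorting lemmas -/

theorem sortDesc_eq {r : ℕ} (α β : GP r) (σ : Equiv.Perm (Fin r)) (hβ : Antitone β)
    (h : β = α ∘ σ) : sortDesc α = β := by
  have h1 : Monotone (α ∘ ((Fin.revPerm.trans σ : Equiv.Perm (Fin r)) : Fin r → Fin r)) := by
    intro x y hxy
    have h2 : β x.rev ≤ β y.rev := hβ (Fin.rev_le_rev.mpr hxy)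
    rw [h] at h2
    simpa using h2
  have h3 := (Tuple.comp_sort_eq_comp_iff_monotone).mpr h1
  funext i
  unfold sortDesc
  rw [← h3, h]
  simp

theorem sort_add {r : ℕ} (κ : GP r) (hκ : Antitone κ) (c : Fin r) :
    ∃ i, i ≤ c ∧ κ i = κ c ∧ sortDesc (κ + eV c) = κ + eV i ∧ Antitone (κ + eV i) := by
  have hne : (Finset.univ.filter fun i : Fin r => κ i = κ c).Nonempty := ⟨c, by simp⟩
  obtain ⟨i, hi, hmin⟩ := Finset.exists_minimal hne
  simp only [Finset.mem_filter, Finset.mem_univ, true_and] at hi hmin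
  have hic : i ≤ c := by
    rcases le_total i c with h | h
    · exact h
    · exact hmin rfl h
  have hanti : Antitone (κ + eV i) := by
    intro x y hxy
    have h0 := hκ hxy
    simp only [Pi.add_apply, eV]
    by_cases hy : y = i
    · subst hy
      by_cases hx : x = y
      · subst hx; simp
      · have : κ x ≠ κ y := by
          intro hh
          exact hx (le_antisymm hxy (hmin (hh.trans hi) hxy))
        simp only [hx, if_true, if_false]
        omega
    · simp only [hy, if_false]
      split_ifs <;> omega
  refine ⟨i, hic, hi, ?_, hanti⟩
  refine sortDesc_eq _ _ (Equiv.swap i c) hanti ?_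
  funext x
  simp only [Pi.add_apply, eV, Function.comp]
  by_cases hx : x = i
  · subst hx; simp [hi]
  · by_cases hx2 : x = c
    · subst hx2; simp [hx, hi, Ne.symm hx]
    · rw [Equiv.swap_apply_of_ne_of_ne hx hx2]; simp [hx, hx2]

theorem sort_sub {r : ℕ} (κ : GP r) (hκ : Antitone κ) (c : Fin r) :
    ∃ i, c ≤ i ∧ κ i = κ c ∧ sortDesc (κ - eV c) = κ - eV i ∧ Antitone (κ - eV i) := by
  have hne : (Finset.univ.filter fun i : Fin r => κ i = κ c).Nonempty := ⟨c, by simp⟩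
  obtain ⟨i, hi, hmax⟩ := Finset.exists_maximal hne
  simp only [Finset.mem_filter, Finset.mem_univ, true_and] at hi hmax
  have hic : c ≤ i := by
    rcases le_total c i with h | h
    · exact h
    · exact hmax rfl h
  have hanti : Antitone (κ - eV i) := by
    intro x y hxy
    have h0 := hκ hxy
    simp only [Pi.sub_apply, eV]
    by_cases hx : x = i
    · subst hx
      by_cases hy : y = x
      · subst hy; simp
      · have : κ y ≠ κ x := by
          intro hh
          exact hy (le_antisymm (hmax (hh.trans hi) hxy) hxy)
        simp only [hy, if_true, if_false]
        omega
    · simp only [hx, if_false]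
      split_ifs <;> omega
  refine ⟨i, hic, hi, ?_, hanti⟩
  refine sortDesc_eq _ _ (Equiv.swap i c) hanti ?_
  funext x
  simp only [Pi.sub_apply, eV, Function.comp]
  by_cases hx : x = i
  · subst hx; simp [hi]
  · by_cases hx2 : x = c
    · subst hx2; simp [hx, hi, Ne.symm hx]
    · rw [Equiv.swap_apply_of_ne_of_ne hx hx2]; simp [hx, hx2]

/-! ### The local rule -/

/-- `y` differs from `x` by one box. -/
def UnitStep {r : ℕ} (x y : GP r) : Prop := ∃ a, y = x + eV a ∨ y = x - eV a

/-- `i` is recorded at a cell with the given corners. -/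
def recCell {r : ℕ} (i : ℕ) (κ lam μ ν : GP r) : Prop :=
  ∃ a b : Fin r,
    (lam = κ + eV a ∧ ν = μ + eV b ∧ (a : ℕ) < i ∧ i ≤ (b : ℕ)) ∨
    (κ = lam + eV a ∧ μ = ν + eV b ∧ (b : ℕ) < i ∧ i ≤ (a : ℕ))

theorem eV_inj {r : ℕ} {a b : Fin r} (h : (eV a : GP r) = eV b) : a = b := by
  have := congrFun h a
  simp only [eV] at this
  by_contra hne
  simp [hne] at this

theorem eV_pos {r : ℕ} {a b : Fin r} (h : (eV a : GP r) + eV b = 0) : False := by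
  have := congrFun h a
  simp only [eV, Pi.add_apply, Pi.zero_apply] at this
  split_ifs at this <;> simp_all

theorem recCell_plus {r : ℕ} (i : ℕ) (κ μ : GP r) (a b : Fin r) :
    recCell i κ (κ + eV a) μ (μ + eV b) ↔ (a : ℕ) < i ∧ i ≤ (b : ℕ) := by
  constructor
  · rintro ⟨a', b', ⟨h1, h2, h3, h4⟩ | ⟨h1, h2, h3, h4⟩⟩
    · obtain rfl := eV_inj (add_left_cancel h1)
      obtain rfl := eV_inj (add_left_cancel h2)
      exact ⟨h3, h4⟩
    · exfalso
      refine eV_pos (a := a) (b := a') ?_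
      rw [add_assoc] at h1
      exact (left_eq_add.mp h1)
  · rintro ⟨h3, h4⟩
    exact ⟨a, b, Or.inl ⟨rfl, rfl, h3, h4⟩⟩

theorem recCell_minus {r : ℕ} (i : ℕ) (κ μ : GP r) (a b : Fin r) :
    recCell i κ (κ - eV a) μ (μ - eV b) ↔ (b : ℕ) < i ∧ i ≤ (a : ℕ) := by
  constructor
  · rintro ⟨a', b', ⟨h1, h2, h3, h4⟩ | ⟨h1, h2, h3, h4⟩⟩
    · exfalso
      refine eV_pos (a := a) (b := a') ?_
      have : (0 : GP r) = eV a + eV a' := by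
        have h5 : κ + eV a' - (κ - eV a) = 0 := by rw [h1]; simp
        rw [← h5]; abel
      exact this.symm
    · have e1 : (eV a : GP r) = eV a' := by
        have : κ - (κ - eV a) = eV a' := by nth_rewrite 1 [h1]; abel
        simpa using this
      have e2 : (eV b : GP r) = eV b' := by
        have : μ - (μ - eV b) = eV b' := by nth_rewrite 1 [h2]; abel
        simpa using this
      obtain rfl := eV_inj e1
      obtain rfl := eV_inj e2
      exact ⟨h3, h4⟩
  · rintro ⟨h3, h4⟩
    exact ⟨a, b, Or.inr ⟨by abel, by abel, h3, h4⟩⟩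

theorem pSum_add {r : ℕ} (v w : GP r) (i : ℕ) : pSum (v + w) i = pSum v i + pSum w i := by
  simp [pSum, Finset.sum_add_distrib]

theorem pSum_sub {r : ℕ} (v w : GP r) (i : ℕ) : pSum (v - w) i = pSum v i - pSum w i := by
  simp [pSum, Finset.sum_sub_distrib]

theorem pSum_eV {r : ℕ} (a : Fin r) (i : ℕ) :
    pSum (eV a) i = if (a : ℕ) < i then 1 else 0 := by
  simp [pSum, eV]

/-- Conclusion of the local rule, in the two signs. -/
def LocalConcl {r : ℕ} (κ lam μ ν : GP r) : Prop :=
  ∃ a b : Fin r, (lam = κ + eV a ∧ ν = μ + eV b ∧ a ≤ b) ∨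
    (lam = κ - eV a ∧ ν = μ - eV b ∧ b ≤ a)

theorem LocalConcl.diff {r : ℕ} {κ lam μ ν : GP r} (h : LocalConcl κ lam μ ν) (i : ℕ) :
    pSum ν i - pSum lam i - pSum μ i + pSum κ i = - (if recCell i κ lam μ ν then 1 else 0) := by
  obtain ⟨a, b, ⟨rfl, rfl, hab⟩ | ⟨rfl, rfl, hab⟩⟩ := h
  · have hab' : (a : ℕ) ≤ b := hab
    simp only [recCell_plus, pSum_add, pSum_eV]
    split_ifs <;> omega
  · have hab' : (b : ℕ) ≤ a := hab
    simp only [recCell_minus, pSum_sub, pSum_eV]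
    split_ifs <;> omega

theorem LocalConcl.unit {r : ℕ} {κ lam μ ν : GP r} (h : LocalConcl κ lam μ ν) :
    UnitStep μ ν := by
  obtain ⟨a, b, ⟨h1, h2, hab⟩ | ⟨h1, h2, hab⟩⟩ := h
  · exact ⟨b, Or.inl h2⟩
  · exact ⟨b, Or.inr h2⟩

theorem anti_succ {r : ℕ} {v : GP r} (h : Antitone v) {x y : Fin r} (hxy : (x : ℕ) ≤ y) :
    v y ≤ v x := h hxy

theorem local_rule {r : ℕ} {κ lam ν : GP r} (hκ : Antitone κ) (hl : Antitone lam)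
    (hν : Antitone ν) (h1 : UnitStep κ lam) (h2 : UnitStep lam ν) :
    Antitone (sortDesc (κ + ν - lam)) ∧ UnitStep κ (sortDesc (κ + ν - lam)) ∧
      LocalConcl κ lam (sortDesc (κ + ν - lam)) ν := by
  obtain ⟨a, ha⟩ := h1
  obtain ⟨c, rfl | rfl⟩ := h2
  · have e : κ + (lam + eV c) - lam = κ + eV c := by abel
    rw [e]
    obtain ⟨i, hic, hi, hs, hanti⟩ := sort_add κ hκ c
    rw [hs]
    refine ⟨hanti, ⟨i, Or.inl rfl⟩, ?_⟩
    by_cases hne : i = c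
    · subst hne
      rcases ha with rfl | rfl
      · exact ⟨a, a, Or.inl ⟨rfl, by abel, le_rfl⟩⟩
      · exact ⟨a, a, Or.inr ⟨rfl, by abel, le_rfl⟩⟩
    · have hlt : (i : ℕ) < c := Fin.lt_def.mp (lt_of_le_of_ne hic hne)
      have hcr := c.isLt
      obtain ⟨c', hc'⟩ : ∃ c' : Fin r, (c' : ℕ) + 1 = c := ⟨⟨c - 1, by omega⟩, by simp; omega⟩
      have hk1 : κ c ≤ κ c' := anti_succ hκ (by omega)
      have hk2 : κ c' ≤ κ i := anti_succ hκ (by omega)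
      have hv1 : (lam + eV c) c ≤ (lam + eV c) c' := anti_succ hν (by omega)
      have hcc : c' ≠ c := by intro h; subst h; omega
      rcases ha with rfl | rfl
      · have hac : a = c' := by
          by_contra hh
          simp only [Pi.add_apply, eV, hcc, if_false, Ne.symm hh, if_true] at hv1
          split_ifs at hv1 <;> omega
        subst hac
        have hai : a = i := by
          by_contra hh
          have h3 : (κ + eV a) a ≤ (κ + eV a) i := anti_succ hl (by omega)
          simp only [Pi.add_apply, eV, if_true, Ne.symm hh, if_false] at h3
          omega
        subst hai
        exact ⟨a, c, Or.inl ⟨rfl, by abel, hic⟩⟩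
      · have hac : a = c := by
          by_contra hh
          simp only [Pi.add_apply, Pi.sub_apply, eV, hcc, if_false, Ne.symm hh, if_true] at hv1
          split_ifs at hv1 <;> omega
        subst hac
        exact ⟨a, i, Or.inr ⟨rfl, by abel, hic⟩⟩
  · have e : κ + (lam - eV c) - lam = κ - eV c := by abel
    rw [e]
    obtain ⟨i, hic, hi, hs, hanti⟩ := sort_sub κ hκ c
    rw [hs]
    refine ⟨hanti, ⟨i, Or.inr rfl⟩, ?_⟩
    by_cases hne : i = c
    · subst hne
      rcases ha with rfl | rfl
      · exact ⟨a, a, Or.inl ⟨rfl, by abel, le_rfl⟩⟩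
      · exact ⟨a, a, Or.inr ⟨rfl, by abel, le_rfl⟩⟩
    · have hlt : (c : ℕ) < i := Fin.lt_def.mp (lt_of_le_of_ne hic (Ne.symm hne))
      have hir := i.isLt
      obtain ⟨c', hc'⟩ : ∃ c' : Fin r, (c' : ℕ) = c + 1 := ⟨⟨c + 1, by omega⟩, rfl⟩
      have hk1 : κ c' ≤ κ c := anti_succ hκ (by omega)
      have hk2 : κ i ≤ κ c' := anti_succ hκ (by omega)
      have hv1 : (lam - eV c) c' ≤ (lam - eV c) c := anti_succ hν (by omega)
      have hcc : c' ≠ c := by intro h; subst h; omega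
      rcases ha with rfl | rfl
      · have hac : a = c := by
          by_contra hh
          simp only [Pi.add_apply, Pi.sub_apply, eV, hcc, if_false, Ne.symm hh, if_true] at hv1
          split_ifs at hv1 <;> omega
        subst hac
        exact ⟨a, i, Or.inl ⟨rfl, by abel, hic⟩⟩
      · have hac : a = c' := by
          by_contra hh
          simp only [Pi.sub_apply, eV, hcc, if_false, Ne.symm hh, if_true] at hv1
          split_ifs at hv1 <;> omega
        subst hac
        have hai : a = i := by
          by_contra hh
          have h3 : (κ - eV a) i ≤ (κ - eV a) a := anti_succ hl (by omega)
          simp only [Pi.sub_apply, eV, if_true, Ne.symm hh, if_false] at h3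
          omega
        subst hai
        exact ⟨a, c, Or.inr ⟨rfl, by abel, hic⟩⟩

/-! ### Promotion -/

theorem BKseg_beyond {r : ℕ} (S : ℕ → GP r) (m k : ℕ) (h : k = 0 ∨ m < k) :
    BKseg 1 m S k = S k := by
  induction m with
  | zero => rfl
  | succ m ih =>
    have : k ≠ 1 + m := by omega
    simp only [BKseg, Function.comp, BK, this, if_false]
    exact ih (by omega)

theorem BKseg_stable {r : ℕ} (S : ℕ → GP r) (m k d : ℕ) (h : k ≤ m) :
    BKseg 1 (m + d) S k = BKseg 1 m S k := by
  induction d with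
  | zero => rfl
  | succ d ih =>
    have : k ≠ 1 + (m + d) := by omega
    rw [← add_assoc]
    simp only [BKseg, Function.comp, BK, this, if_false]
    exact ih

theorem promo_zero {r : ℕ} (t : ℕ) (S : ℕ → GP r) : promo t S 0 = S 0 :=
  BKseg_beyond S _ 0 (Or.inl rfl)

theorem promo_succ {r : ℕ} (t : ℕ) (S : ℕ → GP r) (k : ℕ) (hk : k + 2 ≤ t) :
    promo t S (k + 1) = sortDesc (promo t S k + S (k + 2) - S (k + 1)) := by
  obtain ⟨d, hd⟩ : ∃ d, t - 1 = k + 1 + d := ⟨t - 1 - (k + 1), by omega⟩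
  have h1 : promo t S (k + 1) = BKseg 1 (k + 1) S (k + 1) := by
    unfold promo; rw [hd, BKseg_stable _ _ _ _ le_rfl]
  have h2 : promo t S k = BKseg 1 k S k := by
    unfold promo; rw [hd, add_assoc, BKseg_stable _ _ _ _ le_rfl]
  rw [h1, h2]
  have e : k + 1 = 1 + k := by omega
  simp only [BKseg, Function.comp, BK, e, if_true]
  rw [BKseg_beyond S k (1 + k + 1) (by omega), BKseg_beyond S k (1 + k) (by omega)]
  have e2 : 1 + k - 1 = k := by omega
  have e3 : 1 + k + 1 = k + 2 := by omega
  rw [e2, e3, add_comm (S (k + 2))]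

/-- The first `m` steps of `S` form an oscillating tableau. -/
def Osc {r : ℕ} (m : ℕ) (S : ℕ → GP r) : Prop :=
  S 0 = 0 ∧ (∀ k ≤ m, Antitone (S k)) ∧ ∀ k < m, UnitStep (S k) (S (k + 1))

theorem promo_osc {r : ℕ} (t m : ℕ) (S : ℕ → GP r) (hm : m + 1 ≤ t) (h : Osc (m + 1) S) :
    Osc m (promo t S) ∧ ∀ k < m,
      LocalConcl (promo t S k) (S (k + 1)) (promo t S (k + 1)) (S (k + 2)) := by
  obtain ⟨h0, ha, hu⟩ := h
  have key : ∀ k ≤ m, Antitone (promo t S k) ∧ UnitStep (promo t S k) (S (k + 1)) := by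
    intro k
    induction k with
    | zero =>
      intro _
      rw [promo_zero]
      exact ⟨ha 0 (by omega), hu 0 (by omega)⟩
    | succ k ih =>
      intro hk
      obtain ⟨i1, i2⟩ := ih (by omega)
      have := local_rule i1 (ha (k + 1) (by omega)) (ha (k + 2) (by omega)) i2
        (hu (k + 1) (by omega))
      rw [← promo_succ t S k (by omega)] at this
      exact ⟨this.1, this.2.2.unit⟩
  have key2 : ∀ k < m, UnitStep (promo t S k) (promo t S (k + 1)) ∧
      LocalConcl (promo t S k) (S (k + 1)) (promo t S (k + 1)) (S (k + 2)) := by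
    intro k hk
    obtain ⟨i1, i2⟩ := key k (by omega)
    have := local_rule i1 (ha (k + 1) (by omega)) (ha (k + 2) (by omega)) i2
      (hu (k + 1) (by omega))
    rw [← promo_succ t S k (by omega)] at this
    exact this.2
  exact ⟨⟨by rw [promo_zero, h0], fun k hk => (key k hk).1, fun k hk => (key2 k hk).1⟩,
    fun k hk => (key2 k hk).2⟩

/-- Steps `p, …, q-1` of `S` add boxes in strictly increasing rows. -/
def BlockP {r : ℕ} (S : ℕ → GP r) (p q : ℕ) : Prop :=
  ∃ ρ : ℕ → Fin r, (∀ k, p ≤ k → k < q → S (k + 1) = S k + eV (ρ k)) ∧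
    ∀ k, p ≤ k → k + 1 < q → ρ k < ρ (k + 1)

/-- Steps `p, …, q-1` of `S` remove boxes in strictly decreasing rows. -/
def BlockM {r : ℕ} (S : ℕ → GP r) (p q : ℕ) : Prop :=
  ∃ ρ : ℕ → Fin r, (∀ k, p ≤ k → k < q → S (k + 1) = S k - eV (ρ k)) ∧
    ∀ k, p ≤ k → k + 1 < q → ρ (k + 1) < ρ k

theorem promo_blockP {r : ℕ} (t m : ℕ) (S : ℕ → GP r) (hm : m + 1 ≤ t) (h : Osc (m + 1) S)
    (p q : ℕ) (hq : q ≤ m) (hb : BlockP S (p + 1) (q + 1)) : BlockP (promo t S) p q := by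
  obtain ⟨ρ, h1, h2⟩ := hb
  have ho := (promo_osc t m S hm h).1
  have hex : ∀ k, ∃ i, p ≤ k → k < q → i ≤ ρ (k + 1) ∧
      promo t S k i = promo t S k (ρ (k + 1)) ∧ promo t S (k + 1) = promo t S k + eV i := by
    intro k
    by_cases hk : p ≤ k ∧ k < q
    · obtain ⟨i, hi1, hi2, hi3, _⟩ := sort_add (promo t S k) (ho.2.1 k (by omega)) (ρ (k + 1))
      refine ⟨i, fun _ _ => ⟨hi1, hi2, ?_⟩⟩
      rw [promo_succ t S k (by omega), ← hi3, h1 (k + 1) (by omega) (by omega)]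
      congr 1
      abel
    · exact ⟨ρ 0, fun a b => absurd ⟨a, b⟩ hk⟩
  choose ρ' hρ using hex
  refine ⟨ρ', fun k a b => (hρ k a b).2.2, fun k a b => ?_⟩
  obtain ⟨a1, a2, a3⟩ := hρ k a (by omega)
  obtain ⟨b1, b2, b3⟩ := hρ (k + 1) (by omega) b
  have hcd := h2 (k + 1) (by omega) (by omega)
  by_contra hcon
  push Not at hcon
  have hA := ho.2.1 (k + 1) (by omega)
  have hB := ho.2.1 k (by omega)
  have e1 := hA hcon
  have hid : ρ' k < ρ (k + 1 + 1) := lt_of_le_of_lt a1 hcd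
  have e3 := hB hid.le
  rw [b2, a3] at e1
  simp only [Pi.add_apply, eV, if_true, (ne_of_lt hid).symm, if_false] at e1
  omega

theorem promo_blockM {r : ℕ} (t m : ℕ) (S : ℕ → GP r) (hm : m + 1 ≤ t) (h : Osc (m + 1) S)
    (p q : ℕ) (hq : q ≤ m) (hb : BlockM S (p + 1) (q + 1)) : BlockM (promo t S) p q := by
  obtain ⟨ρ, h1, h2⟩ := hb
  have ho := (promo_osc t m S hm h).1
  have hex : ∀ k, ∃ i, p ≤ k → k < q → ρ (k + 1) ≤ i ∧
      promo t S k i = promo t S k (ρ (k + 1)) ∧ promo t S (k + 1) = promo t S k - eV i := by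
    intro k
    by_cases hk : p ≤ k ∧ k < q
    · obtain ⟨i, hi1, hi2, hi3, _⟩ := sort_sub (promo t S k) (ho.2.1 k (by omega)) (ρ (k + 1))
      refine ⟨i, fun _ _ => ⟨hi1, hi2, ?_⟩⟩
      rw [promo_succ t S k (by omega), ← hi3, h1 (k + 1) (by omega) (by omega)]
      congr 1
      abel
    · exact ⟨ρ 0, fun a b => absurd ⟨a, b⟩ hk⟩
  choose ρ' hρ using hex
  refine ⟨ρ', fun k a b => (hρ k a b).2.2, fun k a b => ?_⟩
  obtain ⟨a1, a2, a3⟩ := hρ k a (by omega)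
  obtain ⟨b1, b2, b3⟩ := hρ (k + 1) (by omega) b
  have hcd := h2 (k + 1) (by omega) (by omega)
  by_contra hcon
  push Not at hcon
  have hA := ho.2.1 (k + 1) (by omega)
  have hB := ho.2.1 k (by omega)
  have e1 := hA hcon
  have hid : ρ (k + 1 + 1) < ρ' k := lt_of_lt_of_le hcd a1
  have e3 := hB hid.le
  rw [b2, a3] at e1
  simp only [Pi.sub_apply, eV, if_true, (ne_of_lt hid), if_false] at e1
  omega

theorem PE_succ {r : ℕ} (t : ℕ) (S : ℕ → GP r) (u : ℕ) :
    PE t S (u + 1) = promo t (PE t S u) := by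
  unfold PE; rw [Function.iterate_succ_apply']

theorem PE_osc {r : ℕ} (t : ℕ) (S : ℕ → GP r) (h : Osc t S) (u m : ℕ) (hu : u + m = t) :
    Osc m (PE t S u) := by
  induction u generalizing m with
  | zero => obtain rfl : m = t := by omega
            exact h
  | succ u ih =>
    rw [PE_succ]
    exact (promo_osc t m _ (by omega) (ih (m + 1) (by omega))).1

theorem PE_blockP {r : ℕ} (t : ℕ) (S : ℕ → GP r) (h : Osc t S) (u p q : ℕ) (hq : u + q ≤ t)
    (hb : BlockP S (u + p) (u + q)) : BlockP (PE t S u) p q := by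
  induction u generalizing p q with
  | zero => simpa [PE] using hb
  | succ u ih =>
    rw [PE_succ]
    refine promo_blockP t (t - u - 1) _ (by omega) (PE_osc t S h u _ (by omega)) p q (by omega) ?_
    refine ih (p + 1) (q + 1) (by omega) ?_
    have e1 : u + (p + 1) = u + 1 + p := by omega
    have e2 : u + (q + 1) = u + 1 + q := by omega
    rwa [e1, e2]

theorem PE_blockM {r : ℕ} (t : ℕ) (S : ℕ → GP r) (h : Osc t S) (u p q : ℕ) (hq : u + q ≤ t)
    (hb : BlockM S (u + p) (u + q)) : BlockM (PE t S u) p q := by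
  induction u generalizing p q with
  | zero => simpa [PE] using hb
  | succ u ih =>
    rw [PE_succ]
    refine promo_blockM t (t - u - 1) _ (by omega) (PE_osc t S h u _ (by omega)) p q (by omega) ?_
    refine ih (p + 1) (q + 1) (by omega) ?_
    have e1 : u + (p + 1) = u + 1 + p := by omega
    have e2 : u + (q + 1) = u + 1 + q := by omega
    rwa [e1, e2]

/-- A positive block at the very start is the column `1, 2, …`. -/
theorem blockP_start {r : ℕ} (S : ℕ → GP r) (q : ℕ) (h : Osc q S) (hb : BlockP S 0 q) :
    S q = fun i : Fin r => if (i : ℕ) < q then 1 else 0 := by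
  obtain ⟨ρ, h1, h2⟩ := hb
  have key : ∀ k ≤ q, (S k = fun i : Fin r => if (i : ℕ) < k then 1 else 0) ∧
      ∀ j, j + 1 = k → (ρ j : ℕ) = j := by
    intro k
    induction k with
    | zero =>
      intro _
      refine ⟨by rw [h.1]; funext i; simp, fun j hj => by omega⟩
    | succ k ih =>
      intro hk
      obtain ⟨i1, i2⟩ := ih (by omega)
      have hstep := h1 k (by omega) (by omega)
      have hge : k ≤ (ρ k : ℕ) := by
        rcases Nat.eq_zero_or_pos k with h0 | hpos
        · omega
        · obtain ⟨j, rfl⟩ : ∃ j, k = j + 1 := ⟨k - 1, by omega⟩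
          have a := i2 j rfl
          have b : (ρ j : ℕ) < ρ (j + 1) := h2 j (by omega) (by omega)
          omega
      have heq : (ρ k : ℕ) = k := by
        by_contra hne
        have hr := (ρ k).isLt
        have hA := h.2.1 (k + 1) hk
        have hh : S (k + 1) (ρ k) ≤ S (k + 1) ⟨k, by omega⟩ := anti_succ hA (by simpa using hge)
        rw [hstep, i1] at hh
        have hx : (⟨k, by omega⟩ : Fin r) ≠ ρ k := by
          intro e; exact hne (by rw [← e])
        simp [eV, hx] at hh
        omega
      refine ⟨?_, fun j hj => by obtain rfl : j = k := by omega
                                 exact heq⟩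
      rw [hstep, i1]
      funext i
      have : i = ρ k ↔ (i : ℕ) = k := by rw [Fin.ext_iff, heq]
      simp only [Pi.add_apply, eV, this]
      split_ifs <;> omega
  exact (key q le_rfl).1

/-- A negative block at the very start is the column `r, r-1, …`. -/
theorem blockM_start {r : ℕ} (S : ℕ → GP r) (q : ℕ) (h : Osc q S) (hb : BlockM S 0 q) :
    S q = fun i : Fin r => if r ≤ (i : ℕ) + q then -1 else 0 := by
  obtain ⟨ρ, h1, h2⟩ := hb
  have key : ∀ k ≤ q, (S k = fun i : Fin r => if r ≤ (i : ℕ) + k then -1 else 0) ∧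
      ∀ j, j + 1 = k → (ρ j : ℕ) + j + 1 = r := by
    intro k
    induction k with
    | zero =>
      intro _
      refine ⟨?_, fun j hj => by omega⟩
      rw [h.1]; funext i
      have := i.isLt
      simp
    | succ k ih =>
      intro hk
      obtain ⟨i1, i2⟩ := ih (by omega)
      have hstep := h1 k (by omega) (by omega)
      have hr := (ρ k).isLt
      have hge : (ρ k : ℕ) + k + 1 ≤ r := by
        rcases Nat.eq_zero_or_pos k with h0 | hpos
        · omega
        · obtain ⟨j, rfl⟩ : ∃ j, k = j + 1 := ⟨k - 1, by omega⟩
          have a := i2 j rfl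
          have b : (ρ (j + 1) : ℕ) < ρ j := h2 j (by omega) (by omega)
          omega
      have heq : (ρ k : ℕ) + k + 1 = r := by
        by_contra hne
        have hA := h.2.1 (k + 1) hk
        have hh : S (k + 1) ⟨r - 1 - k, by omega⟩ ≤ S (k + 1) (ρ k) :=
          anti_succ hA (by simp only []; omega)
        rw [hstep, i1] at hh
        have hx : (⟨r - 1 - k, by omega⟩ : Fin r) ≠ ρ k := by
          intro e; apply hne; rw [← e]; simp only []; omega
        simp only [Pi.sub_apply, eV, hx, if_true, if_false] at hh
        split_ifs at hh <;> omega
      refine ⟨?_, fun j hj => by obtain rfl : j = k := by omega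
                                 exact heq⟩
      rw [hstep, i1]
      funext i
      have : i = ρ k ↔ (i : ℕ) + k + 1 = r := by rw [Fin.ext_iff]; omega
      simp only [Pi.sub_apply, eV, this]
      split_ifs <;> omega
  exact (key q le_rfl).1

/-! ### Oscillization -/

theorem diffSet_add {r : ℕ} (μ : GP r) (A : Finset (Fin r)) :
    (Finset.univ.filter fun i : Fin r => (μ + indV A) i ≠ μ i) = A := by
  ext i; simp [indV]

theorem diffSet_sub {r : ℕ} (μ : GP r) (A : Finset (Fin r)) :
    (Finset.univ.filter fun i : Fin r => (μ - indV A) i ≠ μ i) = A := by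
  ext i; simp [indV]

theorem oscStep_add {r : ℕ} (μ : GP r) (A : Finset (Fin r)) (j : ℕ) (i : Fin r) :
    oscStep μ (μ + indV A) j i =
      if i ∈ A ∧ (A.filter fun i' => i' ≤ i).card ≤ j then μ i + 1 else μ i := by
  unfold oscStep
  simp only [diffSet_add]
  by_cases hi : i ∈ A <;> simp [hi, indV]

theorem oscStep_sub {r : ℕ} (μ : GP r) (A : Finset (Fin r)) (j : ℕ) (i : Fin r) :
    oscStep μ (μ - indV A) j i =
      if i ∈ A ∧ (A.filter fun i' => i ≤ i').card ≤ j then μ i - 1 else μ i := by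
  unfold oscStep
  simp only [diffSet_sub]
  by_cases hi : i ∈ A
  · have : ¬ (μ i < μ i - 1) := by omega
    simp [hi, indV, this]
  · simp [hi]

theorem rank_le_mono {r : ℕ} (A : Finset (Fin r)) {x y : Fin r} (h : x ≤ y) :
    (A.filter fun i' => i' ≤ x).card ≤ (A.filter fun i' => i' ≤ y).card := by
  apply Finset.card_le_card
  intro z; simp only [Finset.mem_filter]; exact fun hz => ⟨hz.1, hz.2.trans h⟩

theorem rank_lt {r : ℕ} (A : Finset (Fin r)) {x y : Fin r} (h : x < y) (hy : y ∈ A) :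
    (A.filter fun i' => i' ≤ x).card < (A.filter fun i' => i' ≤ y).card := by
  apply Finset.card_lt_card
  rw [Finset.ssubset_iff_of_subset]
  · exact ⟨y, by simp [hy], by simp [h]⟩
  · intro z; simp only [Finset.mem_filter]; exact fun hz => ⟨hz.1, hz.2.trans h.le⟩

theorem rrank_le_mono {r : ℕ} (A : Finset (Fin r)) {x y : Fin r} (h : x ≤ y) :
    (A.filter fun i' => y ≤ i').card ≤ (A.filter fun i' => x ≤ i').card := by
  apply Finset.card_le_card
  intro z; simp only [Finset.mem_filter]; exact fun hz => ⟨hz.1, h.trans hz.2⟩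

theorem rrank_lt {r : ℕ} (A : Finset (Fin r)) {x y : Fin r} (h : x < y) (hx : x ∈ A) :
    (A.filter fun i' => y ≤ i').card < (A.filter fun i' => x ≤ i').card := by
  apply Finset.card_lt_card
  rw [Finset.ssubset_iff_of_subset]
  · exact ⟨x, by simp [hx], by simp [h]⟩
  · intro z; simp only [Finset.mem_filter]; exact fun hz => ⟨hz.1, h.le.trans hz.2⟩

theorem exists_rank {r : ℕ} (A : Finset (Fin r)) (f : Fin r → ℕ)
    (hinj : Set.InjOn f A) (hpos : ∀ x ∈ A, 1 ≤ f x) (hle : ∀ x ∈ A, f x ≤ A.card)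
    (j : ℕ) (hj : j < A.card) : ∃ x ∈ A, f x = j + 1 := by
  have him : A.image f = Finset.Icc 1 A.card := by
    apply Finset.eq_of_subset_of_card_le
    · intro z hz
      obtain ⟨x, hx, rfl⟩ := Finset.mem_image.mp hz
      exact Finset.mem_Icc.mpr ⟨hpos x hx, hle x hx⟩
    · rw [Finset.card_image_of_injOn hinj]; simp
  have : j + 1 ∈ A.image f := by rw [him]; exact Finset.mem_Icc.mpr ⟨by omega, by omega⟩
  simpa using this

theorem exists_lrank {r : ℕ} (A : Finset (Fin r)) (j : ℕ) (hj : j < A.card) :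
    ∃ x ∈ A, (A.filter fun i' => i' ≤ x).card = j + 1 := by
  refine exists_rank A (fun x => (A.filter fun i' => i' ≤ x).card) ?_ ?_ ?_ j hj
  · intro x hx y hy hxy
    rcases lt_trichotomy x y with h | h | h
    · exact absurd hxy (rank_lt A h hy).ne
    · exact h
    · exact absurd hxy (rank_lt A h hx).ne'
  · intro x hx
    exact Finset.card_pos.mpr ⟨x, by simp [hx]⟩
  · intro x _
    exact Finset.card_filter_le _ _

theorem exists_rrank {r : ℕ} (A : Finset (Fin r)) (j : ℕ) (hj : j < A.card) :
    ∃ x ∈ A, (A.filter fun i' => x ≤ i').card = j + 1 := by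
  refine exists_rank A (fun x => (A.filter fun i' => x ≤ i').card) ?_ ?_ ?_ j hj
  · intro x hx y hy hxy
    rcases lt_trichotomy x y with h | h | h
    · exact absurd hxy (rrank_lt A h hx).ne'
    · exact h
    · exact absurd hxy (rrank_lt A h hy).ne
  · intro x hx
    exact Finset.card_pos.mpr ⟨x, by simp [hx]⟩
  · intro x _
    exact Finset.card_filter_le _ _

theorem oscStep_add_anti {r : ℕ} (μ : GP r) (A : Finset (Fin r)) (j : ℕ) (hμ : Antitone μ)
    (hl : Antitone (μ + indV A)) : Antitone (oscStep μ (μ + indV A) j) := by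
  intro x y hxy
  rw [oscStep_add, oscStep_add]
  have h1 := hμ hxy
  have h2 := hl hxy
  have h3 := rank_le_mono A hxy
  simp only [Pi.add_apply, indV] at h2
  by_cases hx : x ∈ A <;> by_cases hy : y ∈ A <;> simp only [hx, hy, if_true, if_false,
    true_and, false_and] at h2 ⊢ <;> (try split_ifs) <;> omega

theorem oscStep_sub_anti {r : ℕ} (μ : GP r) (A : Finset (Fin r)) (j : ℕ) (hμ : Antitone μ)
    (hl : Antitone (μ - indV A)) : Antitone (oscStep μ (μ - indV A) j) := by
  intro x y hxy
  rw [oscStep_sub, oscStep_sub]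
  have h1 := hμ hxy
  have h2 := hl hxy
  have h3 := rrank_le_mono A hxy
  simp only [Pi.sub_apply, indV] at h2
  by_cases hx : x ∈ A <;> by_cases hy : y ∈ A <;> simp only [hx, hy, if_true, if_false,
    true_and, false_and] at h2 ⊢ <;> (try split_ifs) <;> omega

theorem oscStep_add_block {r : ℕ} (μ : GP r) (A : Finset (Fin r)) (hr : 0 < r) :
    BlockP (oscStep μ (μ + indV A)) 0 A.card := by
  have hex : ∀ j, ∃ x, j < A.card → x ∈ A ∧ (A.filter fun i' => i' ≤ x).card = j + 1 := by
    intro j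
    by_cases hj : j < A.card
    · obtain ⟨x, hx⟩ := exists_lrank A j hj
      exact ⟨x, fun _ => hx⟩
    · exact ⟨⟨0, hr⟩, fun h => absurd h hj⟩
  choose ρ hρ using hex
  refine ⟨ρ, fun k _ hk => ?_, fun k _ hk => ?_⟩
  · obtain ⟨a1, a2⟩ := hρ k hk
    funext i
    simp only [Pi.add_apply, oscStep_add, eV]
    rcases lt_trichotomy i (ρ k) with h | h | h
    · have := rank_lt A h a1
      have hne := h.ne
      simp only [hne, if_false]
      by_cases hi : i ∈ A <;> simp only [hi, true_and, false_and, if_false] <;>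
        (try split_ifs) <;> omega
    · subst h
      simp [a1, a2]
    · by_cases hi : i ∈ A
      · have := rank_lt A h hi
        have hne := h.ne'
        simp only [hne, if_false, hi, true_and]
        split_ifs <;> omega
      · simp [hi, h.ne']
  · obtain ⟨a1, a2⟩ := hρ k (by omega)
    obtain ⟨b1, b2⟩ := hρ (k + 1) hk
    by_contra hcon
    push Not at hcon
    have := rank_le_mono A hcon
    omega

theorem oscStep_sub_block {r : ℕ} (μ : GP r) (A : Finset (Fin r)) (hr : 0 < r) :
    BlockM (oscStep μ (μ - indV A)) 0 A.card := by
  have hex : ∀ j, ∃ x, j < A.card → x ∈ A ∧ (A.filter fun i' => x ≤ i').card = j + 1 := by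
    intro j
    by_cases hj : j < A.card
    · obtain ⟨x, hx⟩ := exists_rrank A j hj
      exact ⟨x, fun _ => hx⟩
    · exact ⟨⟨0, hr⟩, fun h => absurd h hj⟩
  choose ρ hρ using hex
  refine ⟨ρ, fun k _ hk => ?_, fun k _ hk => ?_⟩
  · obtain ⟨a1, a2⟩ := hρ k hk
    funext i
    simp only [Pi.sub_apply, oscStep_sub, eV]
    rcases lt_trichotomy (ρ k) i with h | h | h
    · have := rrank_lt A h a1
      have hne := h.ne'
      simp only [hne, if_false]
      by_cases hi : i ∈ A <;> simp only [hi, true_and, false_and, if_false] <;>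
        (try split_ifs) <;> omega
    · subst h
      simp [a1, a2]
    · by_cases hi : i ∈ A
      · have := rrank_lt A h hi
        have hne := h.ne
        simp only [hne, if_false, hi, true_and]
        split_ifs <;> omega
      · simp [hi, h.ne]
  · obtain ⟨a1, a2⟩ := hρ k (by omega)
    obtain ⟨b1, b2⟩ := hρ (k + 1) hk
    by_contra hcon
    push Not at hcon
    have := rrank_le_mono A hcon
    omega

theorem stepSize_eq {r n : ℕ} {T : ℕ → GP r} {c : ℕ → ℤ} (hT : IsFT r n T c) (j : ℕ)
    (hj : j < n) : stepSize T j = (c j).natAbs := by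
  obtain ⟨A, hA, h⟩ := hT.1.2 j hj
  unfold stepSize
  split_ifs at h
  · rw [h, diffSet_add, hA]
  · rw [h, diffSet_sub, hA]

theorem cum_eq {r n : ℕ} {T : ℕ → GP r} {c : ℕ → ℤ} (hT : IsFT r n T c) (j : ℕ)
    (hj : j ≤ n) : cum T j = cumC c j := by
  unfold cum cumC
  apply Finset.sum_congr rfl
  intro k hk
  exact stepSize_eq hT k (by have := Finset.mem_range.mp hk; omega)

theorem cumC_succ (c : ℕ → ℤ) (j : ℕ) : cumC c (j + 1) = cumC c j + (c j).natAbs := by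
  simp [cumC, Finset.sum_range_succ]

theorem cumC_mono (c : ℕ → ℤ) : Monotone (cumC c) :=
  monotone_nat_of_le_succ fun j => by rw [cumC_succ]; omega

theorem stdIdx_lt {r n : ℕ} {T : ℕ → GP r} {c : ℕ → ℤ} (hT : IsFT r n T c) (j k : ℕ)
    (hj : j < n) (h1 : cumC c j ≤ k) (h2 : k < cumC c (j + 1)) : stdIdx n T k = j := by
  unfold stdIdx
  apply le_antisymm
  · apply Finset.sup_le
    intro x hx
    simp only [Finset.mem_filter, Finset.mem_range] at hx
    rw [cum_eq hT x (by omega)] at hx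
    by_contra hcon
    have : cumC c (j + 1) ≤ cumC c x := cumC_mono c (by simp only [id] at hcon; omega)
    omega
  · refine Finset.le_sup (f := id) ?_
    simp only [Finset.mem_filter, Finset.mem_range]
    exact ⟨by omega, by rw [cum_eq hT j (by omega)]; exact h1⟩

theorem stdIdx_last {r n : ℕ} {T : ℕ → GP r} {c : ℕ → ℤ} (hT : IsFT r n T c) (k : ℕ)
    (h1 : cumC c n ≤ k) : stdIdx n T k = n := by
  unfold stdIdx
  apply le_antisymm
  · apply Finset.sup_le
    intro x hx
    simp only [Finset.mem_filter, Finset.mem_range] at hx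
    simp only [id]; omega
  · refine Finset.le_sup (f := id) ?_
    simp only [Finset.mem_filter, Finset.mem_range]
    exact ⟨by omega, by rw [cum_eq hT n le_rfl]; exact h1⟩

theorem oscStep_zero {r : ℕ} {c : ℤ} {μ lam : GP r} (h : colStep r c μ lam) :
    oscStep μ lam 0 = μ := by
  obtain ⟨A, hA, h⟩ := h
  funext i
  split_ifs at h
  · rw [h, oscStep_add, if_neg]
    rintro ⟨hi, h0⟩
    have : 0 < (A.filter fun i' => i' ≤ i).card := Finset.card_pos.mpr ⟨i, by simp [hi]⟩
    omega
  · rw [h, oscStep_sub, if_neg]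
    rintro ⟨hi, h0⟩
    have : 0 < (A.filter fun i' => i ≤ i').card := Finset.card_pos.mpr ⟨i, by simp [hi]⟩
    omega

theorem oscStep_full {r : ℕ} {c : ℤ} {μ lam : GP r} (h : colStep r c μ lam) :
    oscStep μ lam c.natAbs = lam := by
  obtain ⟨A, hA, h⟩ := h
  funext i
  split_ifs at h
  · rw [h, oscStep_add, ← hA]
    by_cases hi : i ∈ A <;> simp [hi, indV, Finset.card_filter_le]
  · rw [h, oscStep_sub, ← hA]
    by_cases hi : i ∈ A <;> simp [hi, indV, Finset.card_filter_le]

theorem stdT_corner {r n : ℕ} {T : ℕ → GP r} {c : ℕ → ℤ} (hT : IsFT r n T c) (d j : ℕ)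
    (hj : j + d = n) : stdT n T (cumC c j) = T j := by
  induction d generalizing j with
  | zero =>
    obtain rfl : j = n := by omega
    unfold stdT
    rw [stdIdx_last hT _ le_rfl, if_pos rfl]
  | succ d ih =>
    have hstep := hT.1.2 j (by omega)
    by_cases h0 : (c j).natAbs = 0
    · have e : cumC c (j + 1) = cumC c j := by rw [cumC_succ, h0]; rfl
      rw [← e, ih (j + 1) (by omega)]
      have h1 := oscStep_zero hstep
      have h2 := oscStep_full hstep
      rw [h0] at h2
      exact h2.symm.trans h1
    · have := stdIdx_lt hT j (cumC c j) (by omega) le_rfl (by rw [cumC_succ]; omega)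
      unfold stdT
      rw [this, if_neg (by omega), cum_eq hT j (by omega), Nat.sub_self, oscStep_zero hstep]

theorem stdT_block {r n : ℕ} {T : ℕ → GP r} {c : ℕ → ℤ} (hT : IsFT r n T c) (j k : ℕ)
    (hj : j < n) (hk : k ≤ (c j).natAbs) :
    stdT n T (cumC c j + k) = oscStep (T j) (T (j + 1)) k := by
  have hstep := hT.1.2 j (by omega)
  rcases Nat.lt_or_eq_of_le hk with hlt | heq
  · have := stdIdx_lt hT j (cumC c j + k) (by omega) (by omega) (by rw [cumC_succ]; omega)
    unfold stdT
    rw [this, if_neg (by omega), cum_eq hT j (by omega), Nat.add_sub_cancel_left]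
  · rw [heq, ← cumC_succ, stdT_corner hT (n - (j + 1)) (j + 1) (by omega), oscStep_full hstep]

theorem stdT_blockP {r n : ℕ} {T : ℕ → GP r} {c : ℕ → ℤ} (hT : IsFT r n T c) (hr : 0 < r)
    (j : ℕ) (hj : j < n) (hc : 0 ≤ c j) : BlockP (stdT n T) (cumC c j) (cumC c (j + 1)) := by
  obtain ⟨A, hA, h⟩ := hT.1.2 j hj
  rw [if_pos hc] at h
  obtain ⟨ρ, h1, h2⟩ := oscStep_add_block (T j) A hr
  refine ⟨fun k => ρ (k - cumC c j), fun k a b => ?_, fun k a b => ?_⟩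
  · rw [cumC_succ] at b
    obtain ⟨k', rfl⟩ := Nat.exists_eq_add_of_le a
    rw [add_assoc, stdT_block hT j (k' + 1) hj (by omega), stdT_block hT j k' hj (by omega),
      h, h1 k' (by omega) (by omega)]
    simp only [Nat.add_sub_cancel_left]
  · rw [cumC_succ] at b
    have := h2 (k - cumC c j) (by omega) (by omega)
    have e : k + 1 - cumC c j = k - cumC c j + 1 := by omega
    simpa only [e] using this

theorem stdT_blockM {r n : ℕ} {T : ℕ → GP r} {c : ℕ → ℤ} (hT : IsFT r n T c) (hr : 0 < r)
    (j : ℕ) (hj : j < n) (hc : ¬ 0 ≤ c j) : BlockM (stdT n T) (cumC c j) (cumC c (j + 1)) := by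
  obtain ⟨A, hA, h⟩ := hT.1.2 j hj
  rw [if_neg hc] at h
  obtain ⟨ρ, h1, h2⟩ := oscStep_sub_block (T j) A hr
  refine ⟨fun k => ρ (k - cumC c j), fun k a b => ?_, fun k a b => ?_⟩
  · rw [cumC_succ] at b
    obtain ⟨k', rfl⟩ := Nat.exists_eq_add_of_le a
    rw [add_assoc, stdT_block hT j (k' + 1) hj (by omega), stdT_block hT j k' hj (by omega),
      h, h1 k' (by omega) (by omega)]
    simp only [Nat.add_sub_cancel_left]
  · rw [cumC_succ] at b
    have := h2 (k - cumC c j) (by omega) (by omega)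
    have e : k + 1 - cumC c j = k - cumC c j + 1 := by omega
    simpa only [e] using this

theorem exists_block (c : ℕ → ℤ) (n k : ℕ) (hk : k < cumC c n) :
    ∃ j < n, cumC c j ≤ k ∧ k < cumC c (j + 1) := by
  induction n with
  | zero => simp [cumC] at hk
  | succ n ih =>
    by_cases h : k < cumC c n
    · obtain ⟨j, h1, h2⟩ := ih h
      exact ⟨j, by omega, h2⟩
    · exact ⟨n, by omega, by omega, hk⟩

theorem stdT_osc {r n : ℕ} {T : ℕ → GP r} {c : ℕ → ℤ} (hT : IsFT r n T c) (hr : 0 < r) :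
    Osc (cumC c n) (stdT n T) := by
  refine ⟨?_, fun k hk => ?_, fun k hk => ?_⟩
  · have := stdT_corner hT n 0 (by omega)
    rw [hT.2] at this
    simpa [cumC] using this
  · rcases Nat.lt_or_eq_of_le hk with hlt | heq
    · obtain ⟨j, hj, h1, h2⟩ := exists_block c n k hlt
      obtain ⟨k', rfl⟩ := Nat.exists_eq_add_of_le h1
      rw [cumC_succ] at h2
      rw [stdT_block hT j k' hj (by omega)]
      have ha := hT.1.1 j (by omega)
      have hb := hT.1.1 (j + 1) (by omega)
      obtain ⟨A, hA, h⟩ := hT.1.2 j hj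
      split_ifs at h
      · rw [h] at hb ⊢
        exact oscStep_add_anti _ _ _ ha hb
      · rw [h] at hb ⊢
        exact oscStep_sub_anti _ _ _ ha hb
    · rw [heq, stdT_corner hT 0 n (by omega)]
      exact hT.1.1 n le_rfl
  · obtain ⟨j, hj, h1, h2⟩ := exists_block c n k hk
    by_cases hc : 0 ≤ c j
    · obtain ⟨ρ, e, _⟩ := stdT_blockP hT hr j hj hc
      exact ⟨ρ k, Or.inl (e k h1 h2)⟩
    · obtain ⟨ρ, e, _⟩ := stdT_blockM hT hr j hj hc
      exact ⟨ρ k, Or.inr (e k h1 h2)⟩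

/-! ### Prefix sums over the growth diagram -/

/-- Prefix sums of the growth diagram. -/
def FF (r n t : ℕ) (T : ℕ → GP r) (i u v : ℕ) : ℤ := pSum (PE t (stdT n T) u (v - u)) i

theorem cell_eq {r n t : ℕ} {T : ℕ → GP r} {c : ℕ → ℤ} (hT : IsFT r n T c) (hr : 0 < r)
    (ht : t = cumC c n) (i u v : ℕ) (hi : 1 ≤ i) (hi' : i ≤ r - 1) (huv : u < v)
    (hv : v < t) :
    FF r n t T i u (v + 1) - FF r n t T i u v - FF r n t T i (u + 1) (v + 1)
      + FF r n t T i (u + 1) v = - (if PMmem r n t T i (u + 1) (v + 1) then 1 else 0) := by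
  subst ht
  have ho := PE_osc _ _ (stdT_osc hT hr) u (cumC c n - u - 1 + 1) (by omega)
  have hl := (promo_osc (cumC c n) (cumC c n - u - 1) _ (by omega) ho).2 (v - u - 1) (by omega)
  rw [← PE_succ] at hl
  have e1 : v - u - 1 + 1 = v - u := by omega
  have e2 : v - u - 1 + 2 = v + 1 - u := by omega
  rw [e1, e2] at hl
  have hd := hl.diff i
  have e3 : v + 1 - (u + 1) = v - u := by omega
  have e4 : v - (u + 1) = v - u - 1 := by omega
  unfold FF
  rw [e3, e4, hd]
  have : PMmem r n (cumC c n) T i (u + 1) (v + 1) ↔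
      recCell i (PE (cumC c n) (stdT n T) (u + 1) (v - u - 1)) (PE (cumC c n) (stdT n T) u (v - u))
        (PE (cumC c n) (stdT n T) (u + 1) (v - u)) (PE (cumC c n) (stdT n T) u (v + 1 - u)) := by
    unfold PMmem recorded recCell
    have e5 : v - u + 1 = v + 1 - u := by omega
    rw [if_pos (by omega), e3, Nat.add_sub_cancel, e5]
    constructor
    · exact fun h => h.2.2.2.2.2.2.2
    · exact fun h => ⟨by omega, by omega, by omega, by omega, by omega, hi, hi', h⟩
  simp only [this]

theorem sum_Icc_tel (f : ℕ → ℤ) (p d : ℕ) :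
    ∑ a ∈ Finset.Icc (p + 1) (p + d), (f a - f (a - 1)) = f (p + d) - f p := by
  induction d with
  | zero => simp
  | succ d ih =>
    rw [← add_assoc, Finset.sum_Icc_succ_top (by omega), ih]
    simp

theorem PMr_eq {r n t : ℕ} {T : ℕ → GP r} {c : ℕ → ℤ} (hT : IsFT r n T c) (hr : 0 < r)
    (ht : t = cumC c n) (i U V : ℕ) (hi : 1 ≤ i) (hi' : i ≤ r - 1) (hUV : U < V)
    (hV : V < n) :
    (PMr r n t T c i (U + 1) (V + 1) : ℤ) =
      - (FF r n t T i (cumC c U) (cumC c (V + 1)) - FF r n t T i (cumC c U) (cumC c V)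
        - FF r n t T i (cumC c (U + 1)) (cumC c (V + 1))
        + FF r n t T i (cumC c (U + 1)) (cumC c V)) := by
  have m1 : cumC c (U + 1) ≤ cumC c V := cumC_mono c hUV
  have m2 : cumC c (V + 1) ≤ cumC c n := cumC_mono c hV
  unfold PMr
  rw [Finset.card_filter, Finset.sum_product]
  push_cast [Nat.add_sub_cancel]
  have hcell : ∀ a ∈ Finset.Icc (cumC c U + 1) (cumC c (U + 1)),
      ∑ b ∈ Finset.Icc (cumC c V + 1) (cumC c (V + 1)),
        (if PMmem r n t T i a b then (1 : ℤ) else 0) =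
      (fun x => FF r n t T i x (cumC c (V + 1)) - FF r n t T i x (cumC c V)) a -
      (fun x => FF r n t T i x (cumC c (V + 1)) - FF r n t T i x (cumC c V)) (a - 1) := by
    intro a ha
    rw [Finset.mem_Icc] at ha
    have hb : ∀ b ∈ Finset.Icc (cumC c V + 1) (cumC c (V + 1)),
        (if PMmem r n t T i a b then (1 : ℤ) else 0) =
        (fun y => FF r n t T i a y - FF r n t T i (a - 1) y) b -
        (fun y => FF r n t T i a y - FF r n t T i (a - 1) y) (b - 1) := by
      intro b hb
      rw [Finset.mem_Icc] at hb
      have := cell_eq hT hr ht i (a - 1) (b - 1) hi hi' (by omega) (by omega)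
      have e1 : a - 1 + 1 = a := by omega
      have e2 : b - 1 + 1 = b := by omega
      rw [e1, e2] at this
      simp only
      linarith
    rw [Finset.sum_congr rfl hb]
    rw [cumC_succ c V, sum_Icc_tel]
    simp only
    ring
  rw [Finset.sum_congr rfl hcell, cumC_succ c U, sum_Icc_tel]
  ring

theorem FF_diag {r n t : ℕ} {T T' : ℕ → GP r} {c : ℕ → ℤ} (hT : IsFT r n T c)
    (hT' : IsFT r n T' c) (hr : 0 < r) (ht : t = cumC c n) (i U : ℕ) (hU : U < n) :
    FF r n t T i (cumC c U) (cumC c (U + 1)) = FF r n t T' i (cumC c U) (cumC c (U + 1)) := by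
  subst ht
  have m2 : cumC c (U + 1) ≤ cumC c n := cumC_mono c hU
  have hs := cumC_succ c U
  have e : cumC c (U + 1) - cumC c U = (c U).natAbs := by omega
  unfold FF
  rw [e]
  congr 1
  have hosc : ∀ {X : ℕ → GP r}, IsFT r n X c →
      Osc (c U).natAbs (PE (cumC c n) (stdT n X) (cumC c U)) := by
    intro X hX
    have := PE_osc _ _ (stdT_osc hX hr) (cumC c U) (cumC c n - cumC c U) (by omega)
    exact ⟨this.1, fun k hk => this.2.1 k (by omega), fun k hk => this.2.2 k (by omega)⟩
  by_cases hc : 0 ≤ c U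
  · have hb : ∀ {X : ℕ → GP r}, IsFT r n X c →
        BlockP (PE (cumC c n) (stdT n X) (cumC c U)) 0 (c U).natAbs := by
      intro X hX
      refine PE_blockP _ _ (stdT_osc hX hr) _ _ _ (by omega) ?_
      rw [← hs]
      exact stdT_blockP hX hr U hU hc
    rw [blockP_start _ _ (hosc hT) (hb hT), blockP_start _ _ (hosc hT') (hb hT')]
  · have hb : ∀ {X : ℕ → GP r}, IsFT r n X c →
        BlockM (PE (cumC c n) (stdT n X) (cumC c U)) 0 (c U).natAbs := by
      intro X hX
      refine PE_blockM _ _ (stdT_osc hX hr) _ _ _ (by omega) ?_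
      rw [← hs]
      exact stdT_blockM hX hr U hU hc
    rw [blockM_start _ _ (hosc hT) (hb hT), blockM_start _ _ (hosc hT') (hb hT')]

theorem FF_same {r n t : ℕ} {T : ℕ → GP r} {c : ℕ → ℤ} (hT : IsFT r n T c)
    (hr : 0 < r) (ht : t = cumC c n) (i U : ℕ) (hU : U ≤ n) :
    FF r n t T i (cumC c U) (cumC c U) = 0 := by
  subst ht
  have m2 : cumC c U ≤ cumC c n := cumC_mono c hU
  have := (PE_osc _ _ (stdT_osc hT hr) (cumC c U) (cumC c n - cumC c U) (by omega)).1
  unfold FF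
  rw [Nat.sub_self, this]
  simp [pSum]

theorem FF_eq {r n t : ℕ} {T T' : ℕ → GP r} {c : ℕ → ℤ} (hT : IsFT r n T c)
    (hT' : IsFT r n T' c) (hr : 0 < r) (ht : t = cumC c n) (i : ℕ) (hi : 1 ≤ i)
    (hi' : i ≤ r - 1)
    (h : ∀ u v, 1 ≤ u → u ≤ n → 1 ≤ v → v ≤ n → PMr r n t T c i u v = PMr r n t T' c i u v)
    (d : ℕ) : ∀ U, U + d ≤ n →
    FF r n t T i (cumC c U) (cumC c (U + d)) = FF r n t T' i (cumC c U) (cumC c (U + d)) := by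
  induction d using Nat.strong_induction_on with
  | _ d ih =>
    intro U hU
    match d, ih, hU with
    | 0, _, hU => rw [add_zero, FF_same hT hr ht i U hU, FF_same hT' hr ht i U hU]
    | 1, _, hU => exact FF_diag hT hT' hr ht i U (by omega)
    | d + 2, ih, hU =>
      have a1 := PMr_eq hT hr ht i U (U + d + 1) hi hi' (by omega) (by omega)
      have a2 := PMr_eq hT' hr ht i U (U + d + 1) hi hi' (by omega) (by omega)
      rw [h _ _ (by omega) (by omega) (by omega) (by omega)] at a1
      have b1 := ih (d + 1) (by omega) U (by omega)
      have b2 := ih (d + 1) (by omega) (U + 1) (by omega)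
      have b3 := ih d (by omega) (U + 1) (by omega)
      have e1 : U + 1 + (d + 1) = U + d + 1 + 1 := by omega
      have e2 : U + 1 + d = U + d + 1 := by omega
      have e3 : U + (d + 1) = U + d + 1 := by omega
      have e4 : U + (d + 2) = U + d + 1 + 1 := by omega
      rw [e1] at b2
      rw [e2] at b3
      rw [e3] at b1
      rw [e4]
      linarith

theorem pSum_full {r : ℕ} (v : GP r) : pSum v r = ∑ j, v j := by
  unfold pSum
  congr 1
  ext j; simp

theorem total_eq {r n : ℕ} {T : ℕ → GP r} {c : ℕ → ℤ} (hT : IsFT r n T c) (k : ℕ)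
    (hk : k ≤ n) : ∑ j, T k j = ∑ j' ∈ Finset.range k, c j' := by
  induction k with
  | zero => simp [hT.2]
  | succ k ih =>
    rw [Finset.sum_range_succ, ← ih (by omega)]
    obtain ⟨A, hA, h⟩ := hT.1.2 k (by omega)
    split_ifs at h with hc
    · rw [h]; simp [indV, Finset.sum_add_distrib, hA]; omega
    · rw [h]; simp [indV, Finset.sum_sub_distrib, hA]
      rw [abs_of_neg (by omega)]; omega

theorem pSum_succ {r : ℕ} (v : GP r) (j : Fin r) : pSum v (j + 1) = pSum v j + v j := by
  unfold pSum
  have : (Finset.univ.filter fun x : Fin r => (x : ℕ) < j + 1) =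
      insert j (Finset.univ.filter fun x : Fin r => (x : ℕ) < j) := by
    ext x
    simp only [Finset.mem_filter, Finset.mem_univ, true_and, Finset.mem_insert, Fin.ext_iff]
    omega
  rw [this, Finset.sum_insert (by simp)]
  ring

/-- **Theorem.** A fluctuating tableau is uniquely determined by its type together with
its reduced promotion matrices `PMr^1(T), …, PMr^{r-1}(T)`, where
`PMr^i(T)_{u,v} = #{(a,b) ∈ B_u × B_v : i ∈ PM(T)_{a,b}}` and `B_1,…,B_n` are the
consecutive blocks of `{1,…,t}` with `|B_j| = |c_j|`. -/
theorem tableau_determined_by_reduced_promotion_matrices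
    (r n t : ℕ) (T T' : ℕ → GP r) (c : ℕ → ℤ)
    (hT : IsFT r n T c) (hT' : IsFT r n T' c)
    (ht : t = ∑ j ∈ Finset.range n, (c j).natAbs) (ht1 : 1 ≤ t)
    (h : ∀ i, 1 ≤ i → i ≤ r - 1 → ∀ u v, 1 ≤ u → u ≤ n → 1 ≤ v → v ≤ n →
      PMr r n t T c i u v = PMr r n t T' c i u v) :
    ∀ k ≤ n, T k = T' k := by
  intro k hk
  funext j
  have hr : 0 < r := lt_of_le_of_lt (Nat.zero_le _) j.isLt
  have htc : t = cumC c n := ht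
  have key : ∀ i ≤ r, pSum (T k) i = pSum (T' k) i := by
    intro i hir
    rcases Nat.eq_zero_or_pos i with h0 | hpos
    · subst h0; simp [pSum]
    · by_cases hi : i = r
      · subst hi
        rw [pSum_full, pSum_full, total_eq hT k hk, total_eq hT' k hk]
      · have := FF_eq hT hT' hr htc i hpos (by omega) (h i hpos (by omega)) k 0 (by omega)
        have e0 : cumC c 0 = 0 := by simp [cumC]
        simp only [FF, e0, zero_add, Nat.sub_zero, PE, Function.iterate_zero, id] at this
        rwa [stdT_corner hT (n - k) k (by omega), stdT_corner hT' (n - k) k (by omega)] at this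
  have a1 := pSum_succ (T k) j
  have a2 := pSum_succ (T' k) j
  have b1 := key j (by omega)
  have b2 := key (j + 1) (by omega)
  linarith

end FT
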